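/- Let p be an odd prime, m ≥ 1, and K the group of order p^{5m} with presentation ⟨a,b | a^{[a,b]}=a^α, b^{[b,a]}=b^α, a^{p^{2m}}=b^{p^{2m}}=[a,b]^{p^m}=1⟩ where v_p(α-1)=m. For every pair (u,v) ∈ Z(K) × Z(K), the assignment a ↦ au, b ↦ bv extends to a central automorphism of K fixing Z_2(K) pointwise, and the resulting map Z(K) × Z(K) → Aut(K) is an injective group homomorphism whose image is exactly Aut_1(K), the group of central automorphisms; in particular |Aut_1(K)| = p^{4m}. -/

import Mathlib

/-- Relators of the Macdonald-type group `K(α)`: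
`a^{[a,b]} = a^α`, `b^{[b,a]} = b^α`, `a^{p^{2m}} = 1`, `b^{p^{2m}} = 1`, `[a,b]^{p^m} = 1`,
with the convention `[a,b] = a⁻¹b⁻¹ab` and `x^y = y⁻¹xy`. -/
def kRels (p m : ℕ) (α : ℤ) : Set (FreeGroup (Fin 2)) :=
  let a : FreeGroup (Fin 2) := FreeGroup.of 0
  let b : FreeGroup (Fin 2) := FreeGroup.of 1
  let c : FreeGroup (Fin 2) := a⁻¹ * b⁻¹ * a * b
  {(c⁻¹ * a * c) * (a ^ α)⁻¹, (c * b * c⁻¹) * (b ^ α)⁻¹,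
    a ^ (p ^ (2 * m)), b ^ (p ^ (2 * m)), c ^ (p ^ m)}

/-- The group `K(α)` of order `p^{5m}`. -/
abbrev KGroup (p m : ℕ) (α : ℤ) := PresentedGroup (kRels p m α)

/-- `v_p(α - 1) = m`. -/
def vCond (p m : ℕ) (α : ℤ) : Prop :=
  (p : ℤ) ^ m ∣ α - 1 ∧ ¬ (p : ℤ) ^ (m + 1) ∣ α - 1

/-- The extra condition required when `p = 3` and `m = 1`. -/
def specialCond (p m : ℕ) (α : ℤ) : Prop :=
  p = 3 ∧ m = 1 → (α - 1) / 3 ≡ 1 [ZMOD 3]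

/-- `autC T i` is `Aut_i(T)`: automorphisms `g` with `g t * t⁻¹ ∈ Z_i(T)` for all `t`. -/
def autC (T : Type*) [Group T] (i : ℕ) : Subgroup (MulAut T) where
  carrier := {g | ∀ t : T, g t * t⁻¹ ∈ upperCentralSeries T i}
  one_mem' := by intro t; simpa using (upperCentralSeries T i).one_mem
  mul_mem' := by
    intro g h hg hh t
    have h1 := hg (h t)
    have h2 := hh t
    have : (g * h) t * t⁻¹ = (g (h t) * (h t)⁻¹) * (h t * t⁻¹) := by
      simp [MulAut.mul_apply, mul_assoc]
    rw [this]
    exact mul_mem h1 h2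
  inv_mem' := by
    intro g hg t
    have h1 := hg (g⁻¹ t)
    have h2 : g (g⁻¹ t) = t := by simp
    rw [h2] at h1
    have h3 := (upperCentralSeries T i).inv_mem h1
    simpa using h3

/-! Write `q = p ^ m`, `α = 1 + q l` and `c = [a, b]`. The relations make `a ^ q` and `b ^ q`
central and let `c` commute with `a` and `b` modulo them, so every element has the form
`aⁱ bʲ cᵏ z` with `z ∈ ⟨a ^ q, b ^ q⟩`. That nothing else is central, and that the second centre is
no larger than `⟨a ^ q, b ^ q, c⟩`, is seen from the action of `K` on `ℤ/q²` by `a : x ↦ x + 1` and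
`b : x ↦ x + q l x (x - 1) / 2`, for which `c : x ↦ x - q l x`.

The automorphisms that are trivial modulo the centre `Z` are the maps `g ↦ g * h g` with
`h : K → Z` a homomorphism, provided these are bijective. Since `Z` is abelian of exponent `q`, any
two elements of `Z` satisfy the relations of `K`, so `Hom(K, Z) ≅ Z × Z`; moreover every such `h`
kills `q`-th powers and commutators, hence the second centre. Thus `g ↦ g * h g` fixes the second
centre pointwise, and composing these maps multiplies the corresponding `h`. -/

section

open Polynomial Subgroup
open scoped commutatorElement IsMulCommutative

theorem center_le_upperCentralSeries_two (G : Type*) [Group G] :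
    center G ≤ Subgroup.upperCentralSeries G 2 := by
  rw [← Subgroup.upperCentralSeries_one]
  exact Subgroup.upperCentralSeries_mono G one_le_two

section Generation

variable {G : Type*} [Group G] {a b : G}

theorem mem_center_of_commute_of_closure_eq_top (hab : closure {a, b} = ⊤) {z : G}
    (ha : Commute a z) (hb : Commute b z) : z ∈ center G := by
  rw [← centralizer_univ, ← coe_top, ← hab, centralizer_closure, mem_centralizer_iff]
  rintro x (rfl | rfl)
  exacts [ha, hb]

theorem normal_of_le_center {N : Subgroup G} (hN : N ≤ center G) : N.Normal :=
  ⟨fun n hn g ↦ by rwa [mem_center_iff.1 (hN hn) g, mul_inv_cancel_right]⟩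

theorem closure_pair_quotient_eq_top (hab : closure {a, b} = ⊤) (N : Subgroup G) [N.Normal] :
    closure {(a : G ⧸ N), (b : G ⧸ N)} = ⊤ := by
  have h := MonoidHom.map_closure (QuotientGroup.mk' N) {a, b}
  rw [hab, map_top_of_surjective _ (QuotientGroup.mk'_surjective N), Set.image_pair] at h
  exact h.symm

theorem exists_eq_zpow_mul_zpow_mul (hab : closure {a, b} = ⊤) (N : Subgroup G) [N.Normal]
    (hN : Commute (a : G ⧸ N) b) (g : G) : ∃ i j : ℤ, ∃ n ∈ N, g = a ^ i * b ^ j * n := by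
  have hclosure := closure_pair_quotient_eq_top hab N
  have ha : (a : G ⧸ N) ∈ center (G ⧸ N) :=
    mem_center_of_commute_of_closure_eq_top hclosure (.refl _) hN.symm
  have hb : (b : G ⧸ N) ∈ center (G ⧸ N) :=
    mem_center_of_commute_of_closure_eq_top hclosure hN (.refl _)
  have hcenter : center (G ⧸ N) = ⊤ := by
    rw [eq_top_iff, ← hclosure, closure_le]
    rintro x (rfl | rfl)
    exacts [ha, hb]
  let _ := Group.commGroupOfCenterEqTop hcenter
  obtain ⟨i, j, hij⟩ := mem_closure_pair.1 (hclosure ▸ mem_top (g : G ⧸ N))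
  exact ⟨i, j, (a ^ i * b ^ j)⁻¹ * g, QuotientGroup.eq.1 hij, by group⟩

end Generation

theorem mul_pow_of_mul_eq_mul_mul {G : Type*} [Group G] {a c w : G} (hca : c * a = a * c * w)
    (hwa : Commute w a) (hwc : Commute w c) (n : ℕ) :
    (a * c) ^ n = a ^ n * c ^ n * w ^ n.choose 2 := by
  have hpow (n : ℕ) : c ^ n * a = a * c ^ n * w ^ n := by
    induction n with
    | zero => simp
    | succ n ih =>
      calc c ^ (n + 1) * a = c ^ n * a * c * w := by rw [pow_succ, mul_assoc, hca]; group
        _ = a * c ^ n * (w ^ n * c) * w := by rw [ih]; group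
        _ = a * c ^ (n + 1) * w ^ (n + 1) := by
          rw [(hwc.pow_left n).eq, pow_succ, pow_succ]; group
  induction n with
  | zero => simp
  | succ n ih =>
    calc (a * c) ^ (n + 1) = a ^ n * c ^ n * (w ^ n.choose 2 * (a * c)) := by
          rw [pow_succ, ih, mul_assoc]
      _ = a ^ n * (c ^ n * a) * c * w ^ n.choose 2 := by
          rw [((hwa.mul_right hwc).pow_left _).eq]; group
      _ = a ^ n * a * c ^ n * (w ^ n * c) * w ^ n.choose 2 := by rw [hpow]; group
      _ = a ^ (n + 1) * c ^ (n + 1) * w ^ (n + 1).choose 2 := by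
          rw [(hwc.pow_left n).eq, Nat.choose_succ_succ' n 1, Nat.choose_one_right, pow_add w,
            pow_succ, pow_succ]
          simp only [mul_assoc]

theorem dvd_choose_two_of_odd {n : ℕ} (hn : Odd n) : n ∣ n.choose 2 := by
  obtain ⟨k, rfl⟩ := hn
  refine ⟨k, ?_⟩
  rw [Nat.choose_two_right, Nat.add_sub_cancel, mul_left_comm, Nat.mul_div_cancel_left _ two_pos]

/-- The defining relations of `K(1 + ql)`, imposed on two elements of an arbitrary group. The
paper's commutator `a⁻¹b⁻¹ab` is `⁅a⁻¹, b⁻¹⁆` in Mathlib's convention. -/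
structure IsMacdonaldPair {G : Type*} [Group G] (q : ℕ) (l : ℤ) (a b : G) : Prop where
  semiconj_left : SemiconjBy ⁅a⁻¹, b⁻¹⁆⁻¹ a (a ^ (1 + q * l))
  semiconj_right : SemiconjBy ⁅a⁻¹, b⁻¹⁆ b (b ^ (1 + q * l))
  pow_left : a ^ q ^ 2 = 1
  pow_right : b ^ q ^ 2 = 1
  pow_commutator : ⁅a⁻¹, b⁻¹⁆ ^ q = 1

namespace IsMacdonaldPair

variable {G : Type*} [Group G] {q : ℕ} {l : ℤ} {a b : G}

theorem symm (h : IsMacdonaldPair q l a b) : IsMacdonaldPair q l b a where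
  semiconj_left := by rw [commutatorElement_inv]; exact h.semiconj_right
  semiconj_right := by rw [← commutatorElement_inv]; exact h.semiconj_left
  pow_left := h.pow_right
  pow_right := h.pow_left
  pow_commutator := by rw [← commutatorElement_inv, inv_pow, h.pow_commutator, inv_one]

theorem of_commGroup {A : Type*} [CommGroup A] {x y : A} (hx : x ^ q = 1) (hy : y ^ q = 1) :
    IsMacdonaldPair q l x y := by
  have hcomm : ⁅x⁻¹, y⁻¹⁆ = 1 := (Commute.all _ _).commutator_eq
  constructor <;> simp [hcomm, zpow_add, zpow_mul, hx, hy, sq, pow_mul]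

theorem commute_pow_commutator (h : IsMacdonaldPair q l a b) : Commute (a ^ q) ⁅a⁻¹, b⁻¹⁆ := by
  have hpow : (a ^ (1 + q * l)) ^ q = a ^ q := by
    rw [← zpow_natCast, ← zpow_mul, show (1 + q * l) * q = q + (q ^ 2 : ℕ) * l by push_cast; ring,
      zpow_add, zpow_mul, zpow_natCast, zpow_natCast, h.pow_left, one_zpow, mul_one]
  have hsemiconj := h.semiconj_left.pow_right q
  rw [hpow] at hsemiconj
  exact (Commute.inv_left_iff.1 hsemiconj).symm

theorem commutator_mul_left (h : IsMacdonaldPair q l a b) :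
    ⁅a⁻¹, b⁻¹⁆ * a = a * ⁅a⁻¹, b⁻¹⁆ * (a ^ q) ^ (-l) := by
  have hsemiconj := h.semiconj_left
  generalize ⁅a⁻¹, b⁻¹⁆ = c at hsemiconj ⊢
  have hac : a * c = c * (a * (a ^ q) ^ l) := by
    rw [← zpow_natCast, ← zpow_mul, ← zpow_one_add, ← inv_mul_eq_iff_eq_mul, ← mul_assoc,
      hsemiconj.eq, inv_mul_cancel_right]
  rw [hac, mul_assoc, mul_assoc, zpow_neg, mul_inv_cancel, mul_one]

-- Conjugating `a ^ q` by `b` gives `(a * [a, b]) ^ q`; the correction `q.choose 2` is divisible by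
-- `q` as `q` is odd, so this is again `a ^ q`.
theorem commute_pow_right (h : IsMacdonaldPair q l a b) (hq : Odd q) : Commute (a ^ q) b := by
  have hsemiconj : SemiconjBy b⁻¹ a (a * ⁅a⁻¹, b⁻¹⁆) := by
    rw [SemiconjBy, commutatorElement_def]; group
  have hpow : (a * ⁅a⁻¹, b⁻¹⁆) ^ q = a ^ q := by
    obtain ⟨k, hk⟩ := dvd_choose_two_of_odd hq
    have hw : ((a ^ q) ^ (-l)) ^ q = 1 := by
      rw [← zpow_natCast, zpow_comm, zpow_natCast, ← pow_mul, ← sq, h.pow_left, one_zpow]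
    rw [mul_pow_of_mul_eq_mul_mul h.commutator_mul_left
      (((Commute.refl a).pow_left q).zpow_left _) (h.commute_pow_commutator.zpow_left _),
      h.pow_commutator, hk, pow_mul, hw, one_pow, mul_one, mul_one]
  have hb := hsemiconj.pow_right q
  rw [hpow] at hb
  exact (Commute.inv_left_iff.1 hb).symm

theorem commute_mk_commutator (h : IsMacdonaldPair q l a b) (N : Subgroup G) [N.Normal]
    (ha : a ^ q ∈ N) : Commute (a : G ⧸ N) (⁅a⁻¹, b⁻¹⁆ : G) := by
  rw [Commute, SemiconjBy, ← QuotientGroup.mk_mul, ← QuotientGroup.mk_mul, h.commutator_mul_left,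
    QuotientGroup.mk_mul_of_mem _ (N.zpow_mem ha _)]

variable (h : IsMacdonaldPair q l a b) (hq : Odd q) (hab : closure {a, b} = ⊤)
include h hq hab

theorem pow_left_mem_center : a ^ q ∈ center G :=
  mem_center_of_commute_of_closure_eq_top hab ((Commute.refl a).pow_right q)
    (h.commute_pow_right hq).symm

theorem pow_right_mem_center : b ^ q ∈ center G :=
  h.symm.pow_left_mem_center hq (by rwa [Set.pair_comm])

theorem zpowers_sup_zpowers_le_center : zpowers (a ^ q) ⊔ zpowers (b ^ q) ≤ center G :=
  sup_le (zpowers_le.2 (h.pow_left_mem_center hq hab))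
    (zpowers_le.2 (h.pow_right_mem_center hq hab))

theorem exists_eq_zpow_mul_zpow_of_mem {z : G} (hz : z ∈ zpowers (a ^ q) ⊔ zpowers (b ^ q)) :
    ∃ s t : ℤ, z = (a ^ q) ^ s * (b ^ q) ^ t := by
  have := normal_of_le_center (zpowers_le.2 (h.pow_right_mem_center hq hab))
  obtain ⟨_, ⟨s, rfl⟩, _, ⟨t, rfl⟩, rfl⟩ := mem_sup_of_normal_right.1 hz
  exact ⟨s, t, rfl⟩

theorem exists_normalForm (g : G) :
    ∃ i j k : ℤ, ∃ z ∈ zpowers (a ^ q) ⊔ zpowers (b ^ q),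
      g = a ^ i * b ^ j * ⁅a⁻¹, b⁻¹⁆ ^ k * z := by
  set Z := zpowers (a ^ q) ⊔ zpowers (b ^ q)
  have hZ : Z.Normal := normal_of_le_center (h.zpowers_sup_zpowers_le_center hq hab)
  have ha : a ^ q ∈ Z := mem_sup_left (mem_zpowers _)
  have hb : b ^ q ∈ Z := mem_sup_right (mem_zpowers _)
  have hcenter : ((⁅a⁻¹, b⁻¹⁆ : G) : G ⧸ Z) ∈ center (G ⧸ Z) := by
    refine mem_center_of_commute_of_closure_eq_top (closure_pair_quotient_eq_top hab Z)
      (h.commute_mk_commutator Z ha) ?_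
    have hcomm := h.symm.commute_mk_commutator Z hb
    rwa [← commutatorElement_inv, QuotientGroup.mk_inv, Commute.inv_right_iff] at hcomm
  have := normal_of_le_center (zpowers_le.2 hcenter)
  let N := (zpowers ((⁅a⁻¹, b⁻¹⁆ : G) : G ⧸ Z)).comap (QuotientGroup.mk' Z)
  have hN : Commute (a : G ⧸ N) b := by
    rw [← Commute.inv_inv_iff, ← commutatorElement_eq_one_iff_commute]
    exact (QuotientGroup.eq_one_iff (N := N) ⁅a⁻¹, b⁻¹⁆).2 (mem_zpowers _)
  obtain ⟨i, j, n, ⟨k, hk⟩, rfl⟩ := exists_eq_zpow_mul_zpow_mul hab N hN g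
  exact ⟨i, j, k, (⁅a⁻¹, b⁻¹⁆ ^ k)⁻¹ * n, QuotientGroup.eq.1 hk, by group⟩

end IsMacdonaldPair

section Perturb

variable {R : Type*} [CommRing R] {ε : R}

theorem mul_eval_add_mul (hε : ε * ε = 0) (f : R[X]) (x y : R) :
    ε * f.eval (x + ε * y) = ε * f.eval x := by
  obtain ⟨d, hd⟩ := sub_dvd_eval_sub (x + ε * y) x f
  linear_combination ε * hd + y * d * hε

/-- The infinitesimal permutations `x ↦ x + ε f(x)` of a ring in which `ε² = 0`; they multiply as
the polynomials `f` add. -/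
def perturb (hε : ε * ε = 0) : Multiplicative R[X] →* Equiv.Perm R where
  toFun f :=
    { toFun := fun x ↦ x + ε * f.toAdd.eval x
      invFun := fun x ↦ x + ε * -f.toAdd.eval x
      left_inv := fun x ↦ by
        linear_combination -mul_eval_add_mul hε f.toAdd x (f.toAdd.eval x)
      right_inv := fun x ↦ by
        linear_combination mul_eval_add_mul hε f.toAdd x (-f.toAdd.eval x) }
  map_one' := by ext; simp
  map_mul' f g := by
    ext x
    simp only [toAdd_mul, eval_add, Equiv.coe_fn_mk, Equiv.Perm.mul_apply, mul_eval_add_mul hε]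
    ring

theorem perturb_apply (hε : ε * ε = 0) (f : R[X]) (x : R) :
    perturb hε (.ofAdd f) x = x + ε * f.eval x := rfl

theorem perturb_zpow_apply (hε : ε * ε = 0) (f : R[X]) (n : ℤ) (x : R) :
    (perturb hε (.ofAdd f) ^ n) x = x + ε * (n * f.eval x) := by
  rw [← map_zpow, ← ofAdd_zsmul, perturb_apply, eval_smul, zsmul_eq_mul]

theorem addRight_one_zpow_apply (n : ℤ) (x : R) : (Equiv.addRight (1 : R) ^ n) x = x + n := by
  rw [Equiv.zsmul_addRight, Equiv.coe_addRight, zsmul_one]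

theorem commutator_addRight_perturb (hε : ε * ε = 0) (f : R[X]) :
    ⁅(Equiv.addRight (1 : R))⁻¹, (perturb hε (.ofAdd f))⁻¹⁆ =
      perturb hε (.ofAdd (f - f.comp (X + 1))) := by
  rw [commutatorElement_def, inv_inv, inv_inv, ← map_inv, ← ofAdd_neg, Equiv.neg_addRight]
  ext x
  simp only [Equiv.Perm.mul_apply, perturb_apply, Equiv.coe_addRight, add_right_comm x _ 1,
    mul_eval_add_mul hε, eval_neg, eval_sub, eval_comp, eval_add, eval_X, eval_one, mul_neg]
  ring

variable {q : ℕ} {l : ℤ} {r : R}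

theorem perturb_pow_eq_one (hq : (q : R) * q = 0) (f : R[X]) : perturb hq (.ofAdd f) ^ q = 1 := by
  ext x
  rw [← zpow_natCast, perturb_zpow_apply, Int.cast_natCast, ← mul_assoc, hq, zero_mul, add_zero,
    Equiv.Perm.one_apply]

theorem commutator_addRight_perturb_quadratic (hq : (q : R) * q = 0) (hr : 2 * r = l) :
    ⁅(Equiv.addRight (1 : R))⁻¹, (perturb hq (.ofAdd (C r * (X * (X - 1)))))⁻¹⁆ =
      perturb hq (.ofAdd (-(C (l : R) * X))) := by
  have hC : 2 * C r = C (l : R) := by rw [← C_ofNat, ← C_mul, hr]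
  rw [commutator_addRight_perturb]
  congr 2
  simp only [mul_comp, sub_comp, C_comp, X_comp, one_comp]
  linear_combination -X * hC

theorem isMacdonaldPair_addRight_perturb (hq : (q : R) * q = 0) (hr : 2 * r = l) :
    IsMacdonaldPair q l (Equiv.addRight (1 : R)) (perturb hq (.ofAdd (C r * (X * (X - 1))))) where
  semiconj_left := by
    rw [commutator_addRight_perturb_quadratic hq hr, ← map_inv, ← ofAdd_neg, neg_neg]
    ext x
    simp only [Equiv.Perm.mul_apply, perturb_apply, addRight_one_zpow_apply, Equiv.coe_addRight,
      eval_mul, eval_C, eval_X]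
    push_cast
    ring
  semiconj_right := by
    rw [commutator_addRight_perturb_quadratic hq hr, zpow_add, zpow_one, zpow_mul, zpow_natCast,
      perturb_pow_eq_one, one_zpow, mul_one]
    exact (Commute.all _ _).map _
  pow_left := by
    ext x
    rw [← zpow_natCast, addRight_one_zpow_apply, Equiv.Perm.one_apply]
    push_cast
    rw [sq, hq, add_zero]
  pow_right := by rw [sq, pow_mul, perturb_pow_eq_one, one_pow]
  pow_commutator := by rw [commutator_addRight_perturb_quadratic hq hr, perturb_pow_eq_one]

end Perturb

section CentralAut

variable {G : Type*} [Group G]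

/-- The endomorphism `g ↦ g * h g` attached to a homomorphism `h` into the centre. -/
def centralEnd (h : G →* center G) : G →* G where
  toFun g := g * h g
  map_one' := by simp
  map_mul' x y := by
    rw [map_mul, Subgroup.coe_mul, mul_assoc, mul_assoc, ← mul_assoc y, mem_center_iff.1 (h x).2,
      mul_assoc]

theorem centralEnd_apply (h : G →* center G) (g : G) : centralEnd h g = g * h g := rfl

variable (hG : ∀ h : G →* center G, center G ≤ h.ker)

include hG in
theorem centralEnd_comp_centralEnd (h k : G →* center G) :
    (centralEnd h).comp (centralEnd k) = centralEnd (h * k) := by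
  ext g
  have hk : h (k g) = 1 := hG h (k g).2
  rw [MonoidHom.comp_apply, centralEnd_apply, centralEnd_apply, centralEnd_apply, map_mul, hk,
    mul_one, mul_assoc, MonoidHom.mul_apply, mul_comm (h g), Subgroup.coe_mul]

theorem centralEnd_one : centralEnd (1 : G →* center G) = .id G :=
  MonoidHom.ext mul_one

/-- If every homomorphism from `G` to its centre kills the centre, then pointwise multiplication of
such homomorphisms becomes composition of the central automorphisms `g ↦ g * h g`. -/
def centralAut : (G →* center G) →* MulAut G where
  toFun h := (centralEnd h).toMulEquiv (centralEnd h⁻¹)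
    (by rw [centralEnd_comp_centralEnd hG, inv_mul_cancel, centralEnd_one])
    (by rw [centralEnd_comp_centralEnd hG, mul_inv_cancel, centralEnd_one])
  map_one' := MulEquiv.ext fun _ ↦ mul_one _
  map_mul' h k := MulEquiv.ext fun g ↦
    (DFunLike.congr_fun (centralEnd_comp_centralEnd hG h k) g).symm

theorem centralAut_apply (h : G →* center G) (g : G) : centralAut hG h g = g * h g := rfl

theorem centralAut_injective : Function.Injective (centralAut hG) := fun h k hhk ↦ by
  ext g
  exact mul_left_cancel (DFunLike.congr_fun hhk g)

theorem mem_autC_one_iff {φ : MulAut G} : φ ∈ autC G 1 ↔ ∀ g, φ g * g⁻¹ ∈ center G := by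
  rw [← Subgroup.upperCentralSeries_one]
  rfl

theorem range_centralAut : (centralAut hG).range = autC G 1 := by
  ext φ
  rw [mem_autC_one_iff]
  constructor
  · rintro ⟨h, rfl⟩ g
    rw [centralAut_apply, mem_center_iff.1 (h g).2, mul_inv_cancel_right]
    exact (h g).2
  · intro hφ
    have hmul (x y : G) : φ (x * y) * (x * y)⁻¹ = φ x * x⁻¹ * (φ y * y⁻¹) :=
      calc φ (x * y) * (x * y)⁻¹ = φ x * (φ y * y⁻¹) * x⁻¹ := by rw [map_mul]; group
        _ = φ x * x⁻¹ * (φ y * y⁻¹) := by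
          rw [mul_assoc, ← mem_center_iff.1 (hφ y) x⁻¹, mul_assoc]
    let h : G →* center G :=
      MonoidHom.mk' (fun g ↦ ⟨φ g * g⁻¹, hφ g⟩) fun x y ↦ Subtype.ext (hmul x y)
    refine ⟨h, MulEquiv.ext fun g ↦ ?_⟩
    rw [centralAut_apply, mem_center_iff.1 (h g).2]
    exact inv_mul_cancel_right _ _

end CentralAut

theorem exists_two_mul_eq {n : ℕ} (hn : Odd n) (y : ZMod n) : ∃ x, 2 * x = y := by
  have htwo : (2 : ZMod n) * 2⁻¹ = 1 := ZMod.coe_mul_inv_eq_one 2 hn.coprime_two_left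
  exact ⟨2⁻¹ * y, by rw [← mul_assoc, htwo, one_mul]⟩

theorem natCast_mul_self_eq_zero (q : ℕ) : (q : ZMod (q ^ 2)) * q = 0 := by
  rw [← Nat.cast_mul, ← sq, ZMod.natCast_self]

theorem dvd_of_natCast_mul_intCast_eq_zero {q : ℕ} (hq : q ≠ 0) {n : ℤ}
    (h : (q : ZMod (q ^ 2)) * n = 0) : (q : ℤ) ∣ n := by
  rw [← Int.cast_natCast q, ← Int.cast_mul, ZMod.intCast_zmod_eq_zero_iff_dvd, Nat.cast_pow,
    sq] at h
  exact Int.dvd_of_mul_dvd_mul_left (Int.natCast_ne_zero.2 hq) h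

theorem card_sup_of_disjoint {G : Type*} [Group G] {H N : Subgroup G} (hdisj : Disjoint H N)
    (hcomm : ∀ (x : H) (y : N), Commute (x : G) y) :
    Nat.card ↥(H ⊔ N) = Nat.card H * Nat.card N := by
  have hinj : Function.Injective (H.subtype.noncommCoprod N.subtype hcomm) := by
    rw [MonoidHom.noncommCoprod_injective H.subtype N.subtype hcomm, range_subtype, range_subtype]
    exact ⟨H.subtype_injective, N.subtype_injective, hdisj⟩
  have hrange := MonoidHom.noncommCoprod_range H.subtype N.subtype hcomm
  rw [range_subtype, range_subtype] at hrange
  rw [← hrange, ← Nat.card_prod]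
  exact (Nat.card_congr (MonoidHom.ofInjective hinj).toEquiv).symm

namespace KGroup

/-- The generator `a` of `K(α)`. -/
abbrev a {p m : ℕ} {α : ℤ} : KGroup p m α := PresentedGroup.of 0

/-- The generator `b` of `K(α)`. -/
abbrev b {p m : ℕ} {α : ℤ} : KGroup p m α := PresentedGroup.of 1

/-- The commutator `[a, b] = a⁻¹b⁻¹ab` in `K(α)`. -/
abbrev c {p m : ℕ} {α : ℤ} : KGroup p m α :=
  ⁅(a : KGroup p m α)⁻¹, (b : KGroup p m α)⁻¹⁆

variable {p m : ℕ} {l : ℤ}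

local notation "K" => KGroup p m (1 + (p ^ m : ℕ) * l)

theorem forall_mem_kRels_map_eq_one_iff {G : Type*} [Group G] (φ : FreeGroup (Fin 2) →* G) :
    (∀ r ∈ kRels p m (1 + (p ^ m : ℕ) * l), φ r = 1) ↔
      IsMacdonaldPair (p ^ m) l (φ (.of 0)) (φ (.of 1)) := by
  have hcomm : (φ (.of 0))⁻¹ * (φ (.of 1))⁻¹ * φ (.of 0) * φ (.of 1) =
      ⁅(φ (.of 0))⁻¹, (φ (.of 1))⁻¹⁆ := by
    rw [commutatorElement_def, inv_inv, inv_inv]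
  simp only [kRels, Set.forall_mem_insert, Set.mem_singleton_iff, forall_eq, map_mul, map_inv,
    map_pow, map_zpow, hcomm, mul_inv_eq_one, pow_mul']
  exact ⟨fun ⟨hleft, hright, ha, hb, hc⟩ ↦
      ⟨eq_mul_inv_of_mul_eq hleft, mul_inv_eq_iff_eq_mul.1 hright, ha, hb, hc⟩,
    fun h ↦ ⟨by rw [h.semiconj_left.eq, inv_mul_cancel_right],
      by rw [h.semiconj_right.eq, mul_inv_cancel_right], h.pow_left, h.pow_right,
      h.pow_commutator⟩⟩

theorem isMacdonaldPair : IsMacdonaldPair (p ^ m) l (a : K) b :=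
  (forall_mem_kRels_map_eq_one_iff _).1 fun _ ↦ PresentedGroup.one_of_mem

theorem closure_pair (p m : ℕ) (α : ℤ) : closure {(a : KGroup p m α), b} = ⊤ := by
  rw [← PresentedGroup.closure_range_of (kRels p m α)]
  congr 1
  ext x
  simp [Fin.exists_fin_two, eq_comm]

variable {G : Type*} [Group G] {x y : G}

/-- The homomorphism out of `K(1 + pᵐl)` given by the universal property of the presentation. -/
def lift (h : IsMacdonaldPair (p ^ m) l x y) : K →* G :=
  PresentedGroup.toGroup (f := ![x, y]) <| (forall_mem_kRels_map_eq_one_iff _).2 <| by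
    rwa [FreeGroup.lift_apply_of, FreeGroup.lift_apply_of]

theorem lift_a (h : IsMacdonaldPair (p ^ m) l x y) : lift h a = x :=
  PresentedGroup.toGroup.of _

theorem lift_b (h : IsMacdonaldPair (p ^ m) l x y) : lift h b = y :=
  PresentedGroup.toGroup.of _

theorem hom_ext {α : ℤ} {f g : KGroup p m α →* G} (ha : f a = g a) (hb : f b = g b) : f = g :=
  PresentedGroup.ext fun i ↦ by fin_cases i; exacts [ha, hb]

section Model

variable {R : Type*} [CommRing R] {r : R} (hq : ((p ^ m : ℕ) : R) * (p ^ m : ℕ) = 0)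
  (hr : 2 * r = l)

/-- The action of `K(1 + ql)`, `q = pᵐ`, on a ring with `q² = 0` in which `a` is `x ↦ x + 1` and
`b` is `x ↦ x + q l x(x - 1)/2`; then `[a, b]` is `x ↦ x - q l x`. The parameter `r` stands for
`l/2`. -/
noncomputable def rep : K →* Equiv.Perm R :=
  lift (isMacdonaldPair_addRight_perturb hq hr)

theorem rep_a : rep hq hr a = Equiv.addRight (1 : R) := lift_a _

theorem rep_b : rep hq hr b = perturb hq (.ofAdd (C r * (X * (X - 1)))) := lift_b _

theorem rep_a_apply (x : R) : rep hq hr a x = x + 1 := by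
  rw [rep_a, Equiv.coe_addRight]

theorem rep_b_apply (x : R) : rep hq hr b x = x + (p ^ m : ℕ) * (r * (x * (x - 1))) := by
  rw [rep_b, perturb_apply, eval_mul, eval_C, eval_mul, eval_sub, eval_X, eval_one]

theorem rep_zpow_mul_zpow_apply (s t : ℤ) (x : R) :
    rep hq hr ((a ^ p ^ m) ^ s * (b ^ p ^ m) ^ t) x = x + (p ^ m : ℕ) * s := by
  rw [map_mul, map_zpow, map_zpow, map_pow, map_pow, rep_b, perturb_pow_eq_one, one_zpow, mul_one,
    rep_a, ← zpow_natCast, ← zpow_mul, addRight_one_zpow_apply]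
  push_cast
  rfl

theorem rep_normalForm_apply (i j k : ℤ) (x : R) :
    rep hq hr (a ^ i * b ^ j * c ^ k) x =
      x + i + (p ^ m : ℕ) * (j * (r * (x * (x - 1))) - k * l * x) := by
  simp only [c, map_mul, map_zpow, map_commutatorElement, map_inv, rep_a, rep_b,
    commutator_addRight_perturb_quadratic hq hr, Equiv.Perm.mul_apply, addRight_one_zpow_apply]
  simp only [← map_zpow, ← ofAdd_zsmul, perturb_apply, mul_eval_add_mul hq]
  simp only [eval_intCast, zsmul_eq_mul, eval_mul, eval_neg, eval_sub, eval_C, eval_X, eval_one]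
  ring

theorem exists_rep_apply_rep_eq_add (hp : Odd p) {g h : K}
    (hgh : ⁅g, h⁆ ∈ zpowers (a ^ p ^ m) ⊔ zpowers (b ^ p ^ m)) :
    ∃ s : ℤ, ∀ x, rep hq hr g (rep hq hr h x) = rep hq hr h (rep hq hr g x) + (p ^ m : ℕ) * s := by
  obtain ⟨s, t, hst⟩ :=
    isMacdonaldPair.exists_eq_zpow_mul_zpow_of_mem hp.pow (closure_pair p m _) hgh
  refine ⟨s, fun x ↦ ?_⟩
  rw [← rep_zpow_mul_zpow_apply hq hr s t, ← hst]
  simp only [← Equiv.Perm.mul_apply, ← map_mul]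
  rw [commutatorElement_def]
  group

include hq hr

theorem mul_eq_zero_of_commute_a {i j k : ℤ}
    (h : Commute (a ^ i * b ^ j * c ^ k) (a : K)) :
    ((p ^ m : ℕ) : R) * (k * l : ℤ) = 0 := by
  have h0 := congrArg (fun g ↦ rep hq hr g 0) h.eq
  simp only [map_mul (rep hq hr) _ a, map_mul (rep hq hr) a, Equiv.Perm.mul_apply, rep_a_apply,
    rep_normalForm_apply] at h0
  rw [Int.cast_mul]
  linear_combination -h0

theorem mul_eq_zero_of_commutator_a_mem (hp : Odd p) {i j k : ℤ}
    (h : ⁅(a ^ i * b ^ j * c ^ k : K), (a : K)⁆ ∈ zpowers (a ^ p ^ m) ⊔ zpowers (b ^ p ^ m)) :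
    ((p ^ m : ℕ) : R) * (j * l : ℤ) = 0 := by
  obtain ⟨s, hs⟩ := exists_rep_apply_rep_eq_add hq hr hp h
  have h0 := hs 0
  have h1 := hs 1
  simp only [rep_a_apply, rep_normalForm_apply] at h0 h1
  rw [Int.cast_mul]
  linear_combination h1 - h0 - (p ^ m : ℕ) * j * hr

theorem mul_eq_zero_of_commutator_b_mem (hp : Odd p) {i j k : ℤ}
    (h : ⁅(a ^ i * b ^ j * c ^ k : K), (b : K)⁆ ∈ zpowers (a ^ p ^ m) ⊔ zpowers (b ^ p ^ m)) :
    ((p ^ m : ℕ) : R) * (i * l : ℤ) = 0 := by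
  obtain ⟨s, hs⟩ := exists_rep_apply_rep_eq_add hq hr hp h
  have h0 := hs 0
  have h1 := hs 1
  simp only [rep_b_apply, rep_normalForm_apply] at h0 h1
  rw [Int.cast_mul]
  linear_combination h0 - h1 - (p ^ m : ℕ) * i * hr +
    l * k * r * (2 * i + 1 - l * k * (p ^ m : ℕ)) * hq

end Model

theorem commute_pow_a_pow_b (hp : Odd p) : Commute (a ^ p ^ m : K) (b ^ p ^ m) :=
  (isMacdonaldPair.commute_pow_right hp.pow).pow_right _

theorem pow_dvd_and_pow_dvd_of_zpow_mul_zpow_eq_one (hp : Odd p) {s t : ℤ}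
    (h : ((a : K) ^ p ^ m) ^ s * (b ^ p ^ m) ^ t = 1) :
    ((p ^ m : ℕ) : ℤ) ∣ s ∧ ((p ^ m : ℕ) : ℤ) ∣ t := by
  obtain ⟨r, hr⟩ := exists_two_mul_eq (hp.pow (n := m) |>.pow (n := 2)) l
  have hleft {s t : ℤ} (h : ((a : K) ^ p ^ m) ^ s * (b ^ p ^ m) ^ t = 1) :
      ((p ^ m : ℕ) : ℤ) ∣ s := by
    have h0 := rep_zpow_mul_zpow_apply (natCast_mul_self_eq_zero (p ^ m)) hr s t 0
    rw [h, map_one, Equiv.Perm.one_apply, zero_add] at h0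
    exact dvd_of_natCast_mul_intCast_eq_zero (pow_ne_zero m hp.pos.ne') h0.symm
  refine ⟨hleft h, hleft (s := t) (t := s) ?_⟩
  have hswap := congrArg (lift isMacdonaldPair.symm : K →* K) h
  simp only [map_mul, map_zpow, map_pow, lift_a, lift_b, map_one] at hswap
  rw [((commute_pow_a_pow_b hp).zpow_zpow t s).eq, hswap]

section Center

variable (hp : Odd p) (hl : IsCoprime l p)
include hp hl

theorem pow_dvd_of_natCast_mul_eq_zero {n : ℤ}
    (h : ((p ^ m : ℕ) : ZMod ((p ^ m) ^ 2)) * (n * l : ℤ) = 0) : ((p ^ m : ℕ) : ℤ) ∣ n := by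
  have hdvd := dvd_of_natCast_mul_intCast_eq_zero (pow_ne_zero m hp.pos.ne') h
  push_cast at hdvd ⊢
  exact hl.symm.pow_left.dvd_of_dvd_mul_right hdvd

theorem pow_dvd_of_commutator_mem {i j k : ℤ}
    (ha : ⁅(a ^ i * b ^ j * c ^ k : K), (a : K)⁆ ∈ zpowers (a ^ p ^ m) ⊔ zpowers (b ^ p ^ m))
    (hb : ⁅(a ^ i * b ^ j * c ^ k : K), (b : K)⁆ ∈ zpowers (a ^ p ^ m) ⊔ zpowers (b ^ p ^ m)) :
    ((p ^ m : ℕ) : ℤ) ∣ i ∧ ((p ^ m : ℕ) : ℤ) ∣ j := by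
  have hq := natCast_mul_self_eq_zero (p ^ m)
  obtain ⟨r, hr⟩ := exists_two_mul_eq (hp.pow (n := m) |>.pow (n := 2)) l
  exact ⟨pow_dvd_of_natCast_mul_eq_zero hp hl (mul_eq_zero_of_commutator_b_mem hq hr hp hb),
    pow_dvd_of_natCast_mul_eq_zero hp hl (mul_eq_zero_of_commutator_a_mem hq hr hp ha)⟩

theorem pow_dvd_of_commute {i j k : ℤ} (h : Commute (a ^ i * b ^ j * c ^ k) (a : K)) :
    ((p ^ m : ℕ) : ℤ) ∣ k := by
  obtain ⟨r, hr⟩ := exists_two_mul_eq (hp.pow (n := m) |>.pow (n := 2)) l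
  exact pow_dvd_of_natCast_mul_eq_zero hp hl
    (mul_eq_zero_of_commute_a (natCast_mul_self_eq_zero _) hr h)

theorem center_eq : center K = zpowers (a ^ p ^ m) ⊔ zpowers (b ^ p ^ m) := by
  have hle := isMacdonaldPair.zpowers_sup_zpowers_le_center hp.pow
    (closure_pair p m (1 + (p ^ m : ℕ) * l))
  refine le_antisymm (fun g hg ↦ ?_) hle
  obtain ⟨i, j, k, z, hz, rfl⟩ :=
    isMacdonaldPair.exists_normalForm hp.pow (closure_pair p m _) g
  have hcenter : (a ^ i * b ^ j * c ^ k : K) ∈ center K :=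
    (mul_mem_cancel_right (hle hz)).1 hg
  have hcomm (x : K) : Commute (a ^ i * b ^ j * c ^ k) x := (mem_center_iff.1 hcenter x).symm
  obtain ⟨⟨i, rfl⟩, ⟨j, rfl⟩⟩ := pow_dvd_of_commutator_mem hp hl
    (by rw [(hcomm a).commutator_eq]; exact one_mem _)
    (by rw [(hcomm b).commutator_eq]; exact one_mem _)
  obtain ⟨k, rfl⟩ := pow_dvd_of_commute hp hl (hcomm a)
  refine mul_mem (mul_mem (mul_mem ?_ ?_) ?_) hz
  · exact mem_sup_left ⟨i, by rw [zpow_mul, zpow_natCast]⟩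
  · exact mem_sup_right ⟨j, by rw [zpow_mul, zpow_natCast]⟩
  · rw [zpow_mul, zpow_natCast, isMacdonaldPair.pow_commutator, one_zpow]
    exact one_mem _

theorem exists_eq_zpow_mul_zpow_of_mem_center {z : K} (hz : z ∈ center K) :
    ∃ s t : ℤ, z = (a ^ p ^ m) ^ s * (b ^ p ^ m) ^ t :=
  isMacdonaldPair.exists_eq_zpow_mul_zpow_of_mem hp.pow (closure_pair p m _)
    (center_eq hp hl ▸ hz)

theorem center_pow_eq_one (z : center K) : z ^ p ^ m = 1 := by
  have hgen {x : K} (hx : x ^ (p ^ m) ^ 2 = 1) (s : ℤ) : ((x ^ p ^ m) ^ s) ^ p ^ m = 1 := by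
    rw [← zpow_natCast, zpow_comm, zpow_natCast, ← pow_mul, ← sq, hx, one_zpow]
  obtain ⟨s, t, hz⟩ := exists_eq_zpow_mul_zpow_of_mem_center hp hl z.2
  ext
  rw [SubgroupClass.coe_pow, hz, ((commute_pow_a_pow_b hp).zpow_zpow s t).mul_pow,
    hgen isMacdonaldPair.pow_left, hgen isMacdonaldPair.pow_right, one_mul, OneMemClass.coe_one]

theorem map_eq_one_of_mem_upperCentralSeries_two {A : Type*} [CommGroup A]
    (hA : ∀ x : A, x ^ p ^ m = 1) (f : K →* A) {g : K}
    (hg : g ∈ Subgroup.upperCentralSeries K 2) : f g = 1 := by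
  have hzpow (x : K) (n : ℤ) : f x ^ ((p ^ m : ℕ) * n) = 1 := by
    rw [zpow_mul, zpow_natCast, hA, one_zpow]
  have hcommutator (x y : K) : f ⁅x, y⁆ = 1 := by
    rw [map_commutatorElement, (Commute.all _ _).commutator_eq]
  obtain ⟨i, j, k, z, hz, rfl⟩ :=
    isMacdonaldPair.exists_normalForm hp.pow (closure_pair p m _) g
  rw [← center_eq hp hl] at hz
  have hmem : (a ^ i * b ^ j * c ^ k : K) ∈ Subgroup.upperCentralSeries K 2 :=
    (mul_mem_cancel_right (center_le_upperCentralSeries_two K hz)).1 hg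
  have hcentral (x : K) : ⁅(a ^ i * b ^ j * c ^ k : K), x⁆ ∈
      zpowers (a ^ p ^ m) ⊔ zpowers (b ^ p ^ m) := by
    rw [← center_eq hp hl, ← Subgroup.upperCentralSeries_one]
    exact Subgroup.mem_upperCentralSeries_succ_iff.1 hmem x
  obtain ⟨⟨i, rfl⟩, ⟨j, rfl⟩⟩ := pow_dvd_of_commutator_mem hp hl (hcentral a) (hcentral b)
  obtain ⟨s, t, rfl⟩ := exists_eq_zpow_mul_zpow_of_mem_center hp hl hz
  simp only [map_mul, map_zpow, map_pow, hcommutator, hzpow, hA, one_zpow, one_mul]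

theorem card_center : Nat.card (center K) = p ^ (2 * m) := by
  have hdvd {s t : ℤ} (h : ((a : K) ^ p ^ m) ^ s * (b ^ p ^ m) ^ t = 1) :=
    pow_dvd_and_pow_dvd_of_zpow_mul_zpow_eq_one hp h
  have horder {x : K} (hx : x ^ (p ^ m) ^ 2 = 1)
      (h : ∀ s : ℤ, (x ^ p ^ m) ^ s = 1 → ((p ^ m : ℕ) : ℤ) ∣ s) :
      orderOf (x ^ p ^ m) = p ^ m :=
    Nat.dvd_antisymm (orderOf_dvd_of_pow_eq_one (by rw [← pow_mul, ← sq, hx]))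
      (Int.natCast_dvd_natCast.1 (h _ (by rw [zpow_natCast, pow_orderOf_eq_one])))
  have ha : orderOf (a ^ p ^ m : K) = p ^ m := horder isMacdonaldPair.pow_left fun s hs ↦
    (hdvd (s := s) (t := 0) (by rw [hs, zpow_zero, mul_one])).1
  have hb : orderOf (b ^ p ^ m : K) = p ^ m := horder isMacdonaldPair.pow_right fun t ht ↦
    (hdvd (s := 0) (t := t) (by rw [ht, zpow_zero, mul_one])).2
  have hdisj : Disjoint (zpowers (a ^ p ^ m : K)) (zpowers (b ^ p ^ m)) := by
    rw [disjoint_def]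
    rintro _ ⟨s, rfl⟩ ⟨t, ht⟩
    obtain ⟨k, rfl⟩ := (hdvd (s := s) (t := -t) (by
      rw [zpow_neg, mul_inv_eq_one]; exact ht.symm)).1
    have hpow : (a ^ p ^ m : K) ^ p ^ m = 1 := by rw [← pow_mul, ← sq, isMacdonaldPair.pow_left]
    change (a ^ p ^ m : K) ^ _ = 1
    rw [zpow_mul, zpow_natCast, hpow, one_zpow]
  rw [center_eq hp hl, card_sup_of_disjoint hdisj, Nat.card_zpowers, Nat.card_zpowers, ha, hb,
    ← pow_add, two_mul]
  rintro ⟨_, s, rfl⟩ ⟨_, t, rfl⟩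
  exact (commute_pow_a_pow_b hp).zpow_zpow s t

end Center

/-- A homomorphism from `K(1 + pᵐl)` to an abelian group of exponent dividing `pᵐ` amounts to an
arbitrary choice of the images of `a` and `b`. -/
def homEquiv {A : Type*} [CommGroup A] (hA : ∀ x : A, x ^ p ^ m = 1) : (K →* A) ≃* A × A where
  toFun f := (f a, f b)
  invFun w := lift (.of_commGroup (hA w.1) (hA w.2))
  left_inv _ := hom_ext (lift_a _) (lift_b _)
  right_inv _ := Prod.ext (lift_a _) (lift_b _)
  map_mul' _ _ := rfl

theorem homEquiv_symm_apply_a {A : Type*} [CommGroup A] (hA : ∀ x : A, x ^ p ^ m = 1)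
    (w : A × A) : (homEquiv hA).symm w (a : K) = w.1 :=
  lift_a (.of_commGroup (hA w.1) (hA w.2))

theorem homEquiv_symm_apply_b {A : Type*} [CommGroup A] (hA : ∀ x : A, x ^ p ^ m = 1)
    (w : A × A) : (homEquiv hA).symm w (b : K) = w.2 :=
  lift_b (.of_commGroup (hA w.1) (hA w.2))

section CentralAutOfPair

variable (hp : Odd p) (hl : IsCoprime l p)

include hp hl in
theorem center_le_ker (h : K →* center K) : center K ≤ h.ker := fun _ hz ↦
  map_eq_one_of_mem_upperCentralSeries_two hp hl (center_pow_eq_one hp hl) h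
    (center_le_upperCentralSeries_two K hz)

/-- The central automorphism `a ↦ a * u`, `b ↦ b * v` of `K(1 + pᵐl)`, as a homomorphism in
`(u, v)`. -/
def centralAutOfPair : center K × center K →* MulAut K :=
  (centralAut (center_le_ker hp hl)).comp (homEquiv (center_pow_eq_one hp hl)).symm.toMonoidHom

theorem centralAutOfPair_apply (w : center K × center K) (g : K) :
    centralAutOfPair hp hl w g = g * (homEquiv (center_pow_eq_one hp hl)).symm w g := rfl

theorem centralAutOfPair_a (u v : center K) : centralAutOfPair hp hl (u, v) a = a * (u : K) := by
  rw [centralAutOfPair_apply, homEquiv_symm_apply_a]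

theorem centralAutOfPair_b (u v : center K) : centralAutOfPair hp hl (u, v) b = b * (v : K) := by
  rw [centralAutOfPair_apply, homEquiv_symm_apply_b]

theorem centralAutOfPair_apply_of_mem_upperCentralSeries_two (w : center K × center K) {z : K}
    (hz : z ∈ Subgroup.upperCentralSeries K 2) : centralAutOfPair hp hl w z = z := by
  rw [centralAutOfPair_apply,
    map_eq_one_of_mem_upperCentralSeries_two hp hl (center_pow_eq_one hp hl) _ hz,
    OneMemClass.coe_one, mul_one]

theorem centralAutOfPair_injective : Function.Injective (centralAutOfPair (m := m) hp hl) :=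
  (centralAut_injective (center_le_ker hp hl)).comp
    (homEquiv (center_pow_eq_one hp hl)).symm.injective

theorem range_centralAutOfPair : (centralAutOfPair hp hl).range = autC K 1 := by
  rw [centralAutOfPair, MonoidHom.range_comp,
    MonoidHom.range_eq_top_of_surjective _ (MulEquiv.surjective _), ← MonoidHom.range_eq_map,
    range_centralAut]

include hp hl in
theorem card_autC_one : Nat.card (autC K 1) = p ^ (4 * m) := by
  rw [← range_centralAutOfPair hp hl,
    ← Nat.card_congr (MonoidHom.ofInjective (centralAutOfPair_injective hp hl)).toEquiv,
    Nat.card_prod, card_center hp hl, ← pow_add]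
  congr 1
  ring

end CentralAutOfPair

end KGroup

theorem exists_eq_one_add_mul_of_vCond {p m : ℕ} {α : ℤ} (hp : p.Prime) (hα : vCond p m α) :
    ∃ l : ℤ, α = 1 + (p ^ m : ℕ) * l ∧ IsCoprime l p := by
  obtain ⟨⟨l, hl⟩, hndvd⟩ := hα
  refine ⟨l, by rw [Nat.cast_pow, ← hl, add_sub_cancel], ?_⟩
  rw [isCoprime_comm, (Nat.prime_iff_prime_int.1 hp).coprime_iff_not_dvd]
  rintro ⟨r, rfl⟩
  exact hndvd ⟨r, by rw [hl, pow_succ, mul_assoc]⟩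

theorem KGroup_central_automorphisms_general {p m : ℕ} (hp : Odd p) {l α : ℤ}
    (hα : α = 1 + (p ^ m : ℕ) * l) (hl : IsCoprime l p) :
    ∃ Ω : center (KGroup p m α) × center (KGroup p m α) →* MulAut (KGroup p m α),
      Function.Injective Ω ∧
      Ω.range = autC (KGroup p m α) 1 ∧
      (∀ u v : center (KGroup p m α),
        Ω (u, v) KGroup.a = KGroup.a * (u : KGroup p m α) ∧
        Ω (u, v) KGroup.b = KGroup.b * (v : KGroup p m α) ∧
        ∀ z ∈ Subgroup.upperCentralSeries (KGroup p m α) 2, Ω (u, v) z = z) ∧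
      Nat.card (autC (KGroup p m α) 1) = p ^ (4 * m) := by
  subst hα
  open KGroup in
  exact ⟨centralAutOfPair hp hl, centralAutOfPair_injective hp hl, range_centralAutOfPair hp hl,
    fun u v ↦ ⟨centralAutOfPair_a hp hl u v, centralAutOfPair_b hp hl u v,
      fun _ ↦ centralAutOfPair_apply_of_mem_upperCentralSeries_two hp hl (u, v)⟩,
    card_autC_one hp hl⟩

end

theorem KGroup_central_automorphisms (p m : ℕ) (hp : p.Prime) (hodd : Odd p) (hm : 1 ≤ m)
    (α : ℤ) (hα : vCond p m α) (hα' : specialCond p m α) :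
    ∃ Ω : (Subgroup.center (KGroup p m α)) × (Subgroup.center (KGroup p m α)) →*
        MulAut (KGroup p m α),
      Function.Injective Ω ∧
      Ω.range = autC (KGroup p m α) 1 ∧
      (∀ u v : Subgroup.center (KGroup p m α),
        Ω (u, v) (PresentedGroup.of 0) = (PresentedGroup.of 0 : KGroup p m α) * u ∧
        Ω (u, v) (PresentedGroup.of 1) = (PresentedGroup.of 1 : KGroup p m α) * v ∧
        ∀ z ∈ upperCentralSeries (KGroup p m α) 2, Ω (u, v) z = z) ∧
      Nat.card (autC (KGroup p m α) 1) = p ^ (4 * m) := by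
  obtain ⟨l, hαl, hl⟩ := exists_eq_one_add_mul_of_vCond hp hα
  exact KGroup_central_automorphisms_general hodd hαl hl
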